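/- For every k ≥ 1 and n ≥ 4, γ_{[k]R}(C_4 □ P_n) ≤ 4(n−2)·⌈(k+5)/5⌉ + 8·⌈(k+3−⌈(k+5)/5⌉)/3⌉ − ⌈2n/3⌉ ≤ (12nk + 8k + 110n − 40)/15. -/

import Mathlib

open SimpleGraph Finset
open scoped Classical

/-- Closed neighborhood of a vertex. -/
def closedNbr {V : Type*} (G : SimpleGraph V) (v : V) : Set V :=
  insert v (G.neighborSet v)

/-- `S` is an efficient dominating set: every vertex lies in the closed
neighborhood of exactly one vertex of `S`. -/
def IsEffDomSet {V : Type*} (G : SimpleGraph V) (S : Set V) : Prop :=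
  ∀ v : V, ∃! u, u ∈ S ∧ v ∈ closedNbr G u

/-- `S` is a dominating set. -/
def IsDomSet {V : Type*} (G : SimpleGraph V) (S : Set V) : Prop :=
  ∀ v : V, v ∉ S → ∃ u ∈ S, G.Adj u v

/-- The domination number. -/
noncomputable def domNumber {V : Type*} (G : SimpleGraph V) [Fintype V] : ℕ :=
  sInf {n | ∃ S : Set V, IsDomSet G S ∧ S.ncard = n}

/-- `f` is a `[k]`-Roman dominating function on `G`. -/
noncomputable def IsKRDF {V : Type*} (G : SimpleGraph V) [Fintype V] (k : ℕ) (f : V → ℕ) : Prop :=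
  (∀ v, f v ≤ k + 1) ∧
  ∀ v : V, f v < k →
    f v + ∑ u ∈ univ.filter (fun u => G.Adj v u), f u ≥
      k + (univ.filter (fun u => G.Adj v u ∧ 0 < f u)).card

/-- The `[k]`-Roman domination number. -/
noncomputable def kRoman {V : Type*} (G : SimpleGraph V) [Fintype V] (k : ℕ) : ℕ :=
  sInf {w | ∃ f : V → ℕ, IsKRDF G k f ∧ ∑ v, f v = w}

/-- `S` is a packing: closed neighborhoods of vertices in `S` are pairwise disjoint. -/
def IsPacking {V : Type*} (G : SimpleGraph V) (S : Set V) : Prop :=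
  S.Pairwise fun u v => Disjoint (closedNbr G u) (closedNbr G v)

/-- The packing number. -/
noncomputable def packingNumber {V : Type*} (G : SimpleGraph V) [Fintype V] : ℕ :=
  sSup {n | ∃ S : Set V, IsPacking G S ∧ S.ncard = n}

/-- The columns `A, B, C` are consecutive columns of `C₄ □ Pₙ`, and the `[k]`-Roman condition holds
on the middle one. Subtraction is truncated, so `x - 1` is the contribution of a neighbour of weight
`x` once the count of positive neighbours is moved to the left-hand side. -/
def ColumnDominated (k : ℕ) (A B C : Fin 4 → ℕ) : Prop :=
  ∀ r, k ≤ B r + ((B (r + 1) - 1) + (B (r + 3) - 1) + ((C r - 1) + (A r - 1)))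

lemma isKRDF_condition_of_le_sum_pred {V : Type*} (G : SimpleGraph V) [Fintype V] {k : ℕ}
    {f : V → ℕ} {v : V}
    (h : k ≤ f v + ∑ u ∈ univ.filter (fun u => G.Adj v u), (f u - 1)) :
    f v + ∑ u ∈ univ.filter (fun u => G.Adj v u), f u ≥
      k + (univ.filter (fun u => G.Adj v u ∧ 0 < f u)).card := by
  have h1 : ∑ u ∈ univ.filter (fun u => G.Adj v u), f u =
      ∑ u ∈ univ.filter (fun u => G.Adj v u), (f u - 1) +
        (univ.filter (fun u => G.Adj v u ∧ 0 < f u)).card := by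
    rw [← Finset.filter_filter, Finset.card_filter, ← Finset.sum_add_distrib]
    refine Finset.sum_congr rfl fun u _ => ?_
    split_ifs <;> omega
  omega

lemma sum_cycleGraph_four_adj (w : Fin 4 → ℕ) (r : Fin 4) :
    ∑ s, (if (cycleGraph 4).Adj r s then w s else 0) = w (r + 1) + w (r + 3) := by
  have h : ∀ s, (cycleGraph 4).Adj r s ↔ s = r + 1 ∨ s = r + 3 := by
    revert r
    simp only [cycleGraph_adj]
    decide
  simp only [h, Fin.sum_univ_four]
  fin_cases r <;> simp [add_comm]

lemma sum_pathGraph_adj {n : ℕ} (w : ℕ → ℕ) (h0 : w 0 = 0) (hn : w (n + 1) = 0) (i : Fin n) :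
    ∑ j : Fin n, (if (pathGraph n).Adj i j then w (j + 1) else 0) = w (i + 2) + w i := by
  have hsplit : ∀ j : Fin n, (if (pathGraph n).Adj i j then w (j + 1) else 0) =
      (if (i : ℕ) + 1 = j then w (j + 1) else 0) + (if (i : ℕ) = j + 1 then w (j + 1) else 0) := by
    intro j
    rw [pathGraph_adj]
    split_ifs <;> omega
  rw [Finset.sum_congr rfl fun j _ => hsplit j, Finset.sum_add_distrib,
    Fin.sum_univ_eq_sum_range (fun j => if (i : ℕ) + 1 = j then w (j + 1) else 0) n,
    Fin.sum_univ_eq_sum_range (fun j => if (i : ℕ) = j + 1 then w (j + 1) else 0) n]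
  obtain ⟨i, hi⟩ := i
  congr 1
  · rw [Finset.sum_ite_eq]
    split_ifs with h
    · rfl
    · have : i + 2 = n + 1 := by simp at h; omega
      rw [this, hn]
  · cases i with
    | zero => simp [h0]
    | succ i =>
      simp only [Nat.add_right_cancel_iff]
      rw [Finset.sum_ite_eq, if_pos (by simp; omega)]

lemma kRoman_le_sum_columns {n k : ℕ} (F : ℕ → Fin 4 → ℕ) (h0 : F 0 = 0) (hn : F (n + 1) = 0)
    (hle : ∀ i r, F i r ≤ k + 1)
    (hF : ∀ i < n, ColumnDominated k (F i) (F (i + 1)) (F (i + 2))) :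
    kRoman ((cycleGraph 4).boxProd (pathGraph n)) k ≤ ∑ i ∈ range n, ∑ r, F (i + 1) r := by
  refine Nat.sInf_le ⟨fun v => F (v.2 + 1) v.1, ⟨fun v => hle _ _, ?_⟩, ?_⟩
  · rintro ⟨r, i⟩ -
    apply isKRDF_condition_of_le_sum_pred
    have hsplit : ∀ u : Fin 4 × Fin n,
        (if ((cycleGraph 4).boxProd (pathGraph n)).Adj (r, i) u then F (u.2 + 1) u.1 - 1 else 0) =
          (if i = u.2 then (if (cycleGraph 4).Adj r u.1 then F (u.2 + 1) u.1 - 1 else 0) else 0) +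
          (if r = u.1 then
            (if (pathGraph n).Adj i u.2 then F (u.2 + 1) u.1 - 1 else 0) else 0) := by
      rintro ⟨s, j⟩
      rw [boxProd_adj]
      by_cases hi : i = j
      · subst hi
        by_cases hr : r = s <;> simp [hr]
      · by_cases hr : r = s <;> simp [hr, hi]
    rw [Finset.sum_filter, Finset.sum_congr rfl fun u _ => hsplit u, Finset.sum_add_distrib,
      Fintype.sum_prod_type, Fintype.sum_prod_type_right]
    simp only [Finset.sum_ite_eq, Finset.mem_univ, if_true]
    rw [sum_cycleGraph_four_adj (fun s => F (i + 1) s - 1),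
      sum_pathGraph_adj (fun j => F j r - 1) (by simp [h0]) (by simp [hn])]
    exact hF i i.2 r
  · rw [Fintype.sum_prod_type_right, Fin.sum_univ_eq_sum_range (fun i => ∑ r, F (i + 1) r)]

lemma kRoman_le_mul {n : ℕ} (k : ℕ) (hn : 2 ≤ n) :
    kRoman ((cycleGraph 4).boxProd (pathGraph n)) k ≤ n * (k + 1) := by
  let P : ℕ → Fin 4 → ℕ := fun i => if i % 2 = 0 then ![k + 1, 0, 0, 0] else ![0, 0, k + 1, 0]
  let F : ℕ → Fin 4 → ℕ := fun i => if i = 0 ∨ n < i then 0 else P i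
  have hFP : ∀ i, 0 < i → i ≤ n → F i = P i := fun i h1 h2 => if_neg (by omega)
  refine (kRoman_le_sum_columns F (by simp [F]) (by simp [F]) ?_ ?_).trans (le_of_eq ?_)
  · intro i r
    dsimp only [F, P]
    split_ifs <;> fin_cases r <;> simp
  · intro i hi r
    rw [hFP (i + 1) (by omega) (by omega)]
    rcases (by omega : 0 < i ∨ i + 2 ≤ n) with h | h
    · rw [hFP i h hi.le]
      rcases Nat.mod_two_eq_zero_or_one i with hp | hp <;> fin_cases r <;>
        simp [P, Nat.add_mod, hp] <;> omega
    · rw [hFP (i + 2) (by omega) h]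
      rcases Nat.mod_two_eq_zero_or_one i with hp | hp <;> fin_cases r <;>
        simp [P, Nat.add_mod, hp] <;> omega
  · rw [Finset.sum_eq_card_nsmul (b := k + 1), Finset.card_range, smul_eq_mul]
    intro i hi
    rw [Finset.mem_range] at hi
    rw [hFP (i + 1) (by omega) (by omega)]
    dsimp only [P]
    split_ifs <;> simp [Fin.sum_univ_four]

/-- Weight `a` everywhere, lowered by one along a maximum packing of the columns `0, 1, 2, …`. -/
def packedColumn (a j : ℕ) : Fin 4 → ℕ :=
  if j % 3 = 0 then ![a, a, a - 1, a] else if j % 3 = 1 then ![a - 1, a, a, a] else fun _ => a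

lemma sum_packedColumn {a : ℕ} (ha : 1 ≤ a) (m : ℕ) :
    ∑ j ∈ range m, ∑ r, packedColumn a j r + (2 * m + 2) / 3 = 4 * (a * m) := by
  induction m with
  | zero => simp
  | succ m ih =>
    have hm : ∑ r, packedColumn a m r + (if m % 3 = 2 then 0 else 1) = 4 * a := by
      simp only [packedColumn, Fin.sum_univ_four]
      split_ifs <;> first | omega | (simp; omega)
    rw [Finset.sum_range_succ, Nat.mul_add_one a m]
    have hc : (2 * (m + 1) + 2) / 3 = (2 * m + 2) / 3 + (if m % 3 = 2 then 0 else 1) := by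
      obtain h | h | h : m % 3 = 0 ∨ m % 3 = 1 ∨ m % 3 = 2 := by omega
      all_goals simp only [h, Nat.reduceEqDiff, if_true, if_false]; omega
    omega

/-- The columns `1, …, m + 6`: weight `a` inside and `b` on the two extremal columns, except that
one unit is moved from the second column to the first one while two more are dropped there
(and symmetrically at the other end), and the columns `4, …, m + 3` are packed. -/
def taperedColumn (a b m : ℕ) : ℕ → Fin 4 → ℕ
  | 0 => 0
  | 1 => ![b + 1, b, b, b]
  | 2 => ![a - 1, a - 1, a, a - 1]
  | 3 => fun _ => a
  | j + 4 =>
    if j < m then packedColumn a j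
    else if j = m then fun _ => a
    else if j = m + 1 then
      if m % 3 = 2 then ![a, a - 1, a - 1, a - 1] else ![a - 1, a - 1, a, a - 1]
    else if j = m + 2 then
      if m % 3 = 2 then ![b, b, b + 1, b] else ![b + 1, b, b, b]
    else 0

lemma sum_taperedColumn {a : ℕ} (b m : ℕ) (ha : 1 ≤ a) :
    ∑ i ∈ range (m + 6), ∑ r, taperedColumn a b m (i + 1) r + (2 * (m + 6) + 2) / 3 =
      4 * (a * m) + 16 * a + 8 * b := by
  have hmid : ∑ j ∈ range m, ∑ r, taperedColumn a b m (j + 4) r =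
      ∑ j ∈ range m, ∑ r, packedColumn a j r := by
    refine Finset.sum_congr rfl fun j hj => ?_
    simp only [taperedColumn, if_pos (Finset.mem_range.mp hj)]
  have hpack := sum_packedColumn ha m
  have h1 : ∑ r, taperedColumn a b m 1 r = 4 * b + 1 := by
    simp [taperedColumn, Fin.sum_univ_four]; omega
  have h2 : ∑ r, taperedColumn a b m 2 r + 3 = 4 * a := by
    simp [taperedColumn, Fin.sum_univ_four]; omega
  have h3 : ∑ r, taperedColumn a b m 3 r = 4 * a := by simp [taperedColumn]
  have h4 : ∑ r, taperedColumn a b m (m + 4) r = 4 * a := by simp [taperedColumn]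
  have h5 : ∑ r, taperedColumn a b m (m + 5) r + 3 = 4 * a := by
    simp only [taperedColumn, Fin.sum_univ_four]
    split_ifs <;> first | omega | (simp; omega)
  have h6 : ∑ r, taperedColumn a b m (m + 6) r = 4 * b + 1 := by
    simp only [taperedColumn, Fin.sum_univ_four]
    split_ifs <;> first | omega | (simp; omega)
  rw [Finset.sum_range_succ, Finset.sum_range_succ, Finset.sum_range_succ,
    Finset.sum_range_succ', Finset.sum_range_succ', Finset.sum_range_succ']
  simp only [Nat.add_assoc, Nat.reduceAdd, Nat.zero_add]
  omega

lemma columnDominated_taperedColumn {a b k m : ℕ} (ha : 2 ≤ a) (hb : 1 ≤ b)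
    (hend : k + 3 ≤ 3 * b + a) (hnext : k + 6 ≤ 4 * a + b) (hmid : k + 5 ≤ 5 * a)
    {i : ℕ} (hi : i < m + 6) :
    ColumnDominated k (taperedColumn a b m i) (taperedColumn a b m (i + 1))
      (taperedColumn a b m (i + 2)) := by
  rcases i with _ | _ | _ | _ | j <;> intro r
  · fin_cases r <;> simp [taperedColumn] <;> omega
  · fin_cases r <;> simp [taperedColumn] <;> omega
  · rcases Nat.eq_zero_or_pos m with rfl | h
    · fin_cases r <;> simp [taperedColumn] <;> omega
    · fin_cases r <;> simp [taperedColumn, packedColumn, h] <;> omega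
  · rcases (by omega : m = 0 ∨ m = 1 ∨ 2 ≤ m) with rfl | rfl | h
    · fin_cases r <;> simp [taperedColumn] <;> omega
    · fin_cases r <;> simp [taperedColumn, packedColumn] <;> omega
    · have h0 : 0 < m := by omega
      have h1 : 1 < m := h
      fin_cases r <;> simp [taperedColumn, packedColumn, h0, h1] <;> omega
  · rcases (by omega : j + 2 < m ∨ j + 2 = m ∨ j + 1 = m ∨ j = m ∨ j = m + 1)
      with h | rfl | rfl | rfl | rfl
    · have h0 : j < m := by omega
      have h1 : j + 1 < m := by omega
      rcases (by omega : j % 3 = 0 ∨ j % 3 = 1 ∨ j % 3 = 2) with hj | hj | hj <;>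
        fin_cases r <;> simp [taperedColumn, packedColumn, h, h0, h1, Nat.add_mod, hj] <;> omega
    rotate_right
    · rcases (by omega : m % 3 = 0 ∨ m % 3 = 1 ∨ m % 3 = 2) with hm | hm | hm <;>
        fin_cases r <;> simp [taperedColumn, hm] <;> omega
    all_goals
      rcases (by omega : j % 3 = 0 ∨ j % 3 = 1 ∨ j % 3 = 2) with hj | hj | hj <;>
        fin_cases r <;> simp [taperedColumn, packedColumn, Nat.add_mod, hj] <;> omega

lemma kRoman_add_le_of_six_le {a b k n : ℕ} (hn : 6 ≤ n) (ha : 2 ≤ a) (hb : 1 ≤ b)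
    (hak : a ≤ k + 1) (hbk : b ≤ k) (hend : k + 3 ≤ 3 * b + a) (hnext : k + 6 ≤ 4 * a + b)
    (hmid : k + 5 ≤ 5 * a) :
    kRoman ((cycleGraph 4).boxProd (pathGraph n)) k + (2 * n + 2) / 3 + 8 * a ≤
      4 * (n * a) + 8 * b := by
  obtain ⟨m, rfl⟩ := Nat.exists_eq_add_of_le' hn
  have h := kRoman_le_sum_columns (n := m + 6) (k := k) (taperedColumn a b m) rfl
    (by simp [taperedColumn]) ?_ fun i hi => columnDominated_taperedColumn ha hb hend hnext hmid hi
  · have hsum := sum_taperedColumn b m (by omega : 1 ≤ a)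
    have : (m + 6) * a = a * m + 6 * a := by ring
    omega
  · intro i r
    rcases i with _ | _ | _ | _ | j
    all_goals simp only [taperedColumn, packedColumn]
    all_goals try split_ifs
    all_goals fin_cases r <;> first | omega | (simp <;> omega)

lemma kRoman_add_le_four {a b k : ℕ} (ha : 2 ≤ a) (hb : 1 ≤ b) (hak : a ≤ k + 1) (hbk : b ≤ k)
    (hend : k + 3 ≤ 3 * b + a) (hnext : k + 7 ≤ 4 * a + b) :
    kRoman ((cycleGraph 4).boxProd (pathGraph 4)) k + 4 ≤ 8 * a + 8 * b := by
  let F : ℕ → Fin 4 → ℕ := fun i =>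
    if i = 1 ∨ i = 4 then ![b + 1, b, b, b]
    else if i = 2 ∨ i = 3 then ![a - 1, a - 1, a, a - 1] else 0
  have h := kRoman_le_sum_columns (n := 4) (k := k) F rfl rfl ?_ ?_
  · simp [F, Finset.sum_range_succ, Fin.sum_univ_four] at h
    omega
  · intro i r
    dsimp only [F]
    split_ifs <;> fin_cases r <;> simp <;> omega
  · intro i hi r
    interval_cases i <;> fin_cases r <;> simp [F] <;> omega

lemma kRoman_add_le_five {a b k : ℕ} (ha : 3 ≤ a) (hb : 2 ≤ b) (hak : a ≤ k) (hbk : b ≤ k)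
    (hend : k + 3 ≤ 3 * b + a) (hnext : k + 7 ≤ 4 * a + b) (hmid : k + 5 ≤ 5 * a) :
    kRoman ((cycleGraph 4).boxProd (pathGraph 5)) k + 4 ≤ 12 * a + 8 * b := by
  let F : ℕ → Fin 4 → ℕ := fun i =>
    if i = 1 then ![b + 1, b, b + 1, b]
    else if i = 2 then ![a - 1, a - 2, a - 1, a - 1]
    else if i = 3 then ![a, a + 1, a, a + 1]
    else if i = 4 then ![a - 2, a, a - 2, a - 1]
    else if i = 5 then ![b, b + 1, b, b + 1] else 0
  have h := kRoman_le_sum_columns (n := 5) (k := k) F rfl rfl ?_ ?_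
  · simp [F, Finset.sum_range_succ, Fin.sum_univ_four] at h
    omega
  · intro i r
    dsimp only [F]
    split_ifs <;> fin_cases r <;> simp <;> omega
  · intro i hi r
    interval_cases i <;> fin_cases r <;> simp [F] <;> omega

lemma kRoman_cycleGraph_four_pathGraph_five_twenty :
    kRoman ((cycleGraph 4).boxProd (pathGraph 5)) 20 ≤ 104 := by
  let F : ℕ → Fin 4 → ℕ := fun i =>
    if i = 1 then ![0, 0, 8, 13]
    else if i = 2 then ![9, 14, 0, 0]
    else if i = 3 then ![4, 3, 2, 7]
    else if i = 4 then ![0, 0, 11, 10]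
    else if i = 5 then ![11, 10, 1, 1] else 0
  refine (kRoman_le_sum_columns (n := 5) F rfl rfl ?_ ?_).trans ?_
  · intro i r
    dsimp only [F]
    split_ifs <;> fin_cases r <;> simp
  · intro i hi r
    interval_cases i <;> fin_cases r <;> simp [F]
  · simp [F, Finset.sum_range_succ, Fin.sum_univ_four]

lemma kRoman_add_le {a b k n : ℕ} (hn : 4 ≤ n) (hk : 1 ≤ k) (ha : k + 5 ≤ 5 * a)
    (ha' : 5 * a ≤ k + 9) (hb : k + 3 ≤ 3 * b + a) (hb' : 3 * b + a ≤ k + 5) :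
    kRoman ((cycleGraph 4).boxProd (pathGraph n)) k + (2 * n + 2) / 3 + 8 * a ≤
      4 * (n * a) + 8 * b := by
  have hdom := kRoman_le_mul k (by omega : 2 ≤ n)
  rcases (by omega : n = 4 ∨ n = 5 ∨ 6 ≤ n) with rfl | rfl | hn6
  · by_cases h : k + 7 ≤ 4 * a + b
    · have := kRoman_add_le_four (by omega) (by omega) (by omega) (by omega) hb h
      omega
    · omega
  · by_cases hlarge : k + 7 ≤ 4 * a + b ∧ 3 ≤ a
    · have := kRoman_add_le_five hlarge.2 (by omega) (by omega) (by omega) hb hlarge.1 ha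
      omega
    · by_cases hk20 : k = 20
      · subst hk20
        have := kRoman_cycleGraph_four_pathGraph_five_twenty
        omega
      · have : k ≤ 19 := by omega
        omega
  · by_cases h : k + 6 ≤ 4 * a + b
    · exact kRoman_add_le_of_six_le hn6 (by omega) (by omega) (by omega) (by omega) hb h ha
    · obtain rfl : k = 5 := by omega
      obtain rfl : a = 2 := by omega
      omega

theorem stmt19 (n k : ℕ) (hn : 4 ≤ n) (hk : 1 ≤ k) :
    (kRoman ((cycleGraph 4).boxProd (pathGraph n)) k : ℚ) ≤
        4 * ((n : ℚ) - 2) * ⌈((k : ℚ) + 5) / 5⌉ +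
          8 * ⌈((k : ℚ) + 3 - ⌈((k : ℚ) + 5) / 5⌉) / 3⌉ - ⌈(2 * n : ℚ) / 3⌉ ∧
      4 * ((n : ℚ) - 2) * ⌈((k : ℚ) + 5) / 5⌉ +
          8 * ⌈((k : ℚ) + 3 - ⌈((k : ℚ) + 5) / 5⌉) / 3⌉ - ⌈(2 * n : ℚ) / 3⌉ ≤
        (12 * n * k + 8 * k + 110 * n - 40) / 15 := by
  obtain ⟨a, ha, ha'⟩ : ∃ a : ℕ, k + 5 ≤ 5 * a ∧ 5 * a ≤ k + 9 := ⟨(k + 9) / 5, by omega, by omega⟩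
  obtain ⟨b, hb, hb'⟩ : ∃ b : ℕ, k + 3 ≤ 3 * b + a ∧ 3 * b + a ≤ k + 5 :=
    ⟨(k + 5 - a) / 3, by omega, by omega⟩
  have hmain := kRoman_add_le hn hk ha ha' hb hb'
  obtain ⟨c, hc⟩ : ∃ c, c = (2 * n + 2) / 3 := ⟨_, rfl⟩
  rw [← hc] at hmain
  have hc1 : 2 * n ≤ 3 * c := by omega
  have hc2 : 3 * c ≤ 2 * n + 2 := by omega
  clear hc
  have hnQ : (4 : ℚ) ≤ n := by exact_mod_cast hn
  qify at ha ha' hb hb' hmain hc1 hc2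
  have hca : ⌈((k : ℚ) + 5) / 5⌉ = a := by
    rw [Int.ceil_eq_iff]; push_cast; constructor <;> linarith
  have hcb : ⌈((k : ℚ) + 3 - a) / 3⌉ = b := by
    rw [Int.ceil_eq_iff]; push_cast; constructor <;> linarith
  have hcc : ⌈(2 * n : ℚ) / 3⌉ = c := by
    rw [Int.ceil_eq_iff]; push_cast; constructor <;> linarith
  simp only [hca, Int.cast_natCast, hcb, hcc]
  exact ⟨by linarith, by nlinarith⟩
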